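/- Let x be a complex number and let a, d be complex numbers with d ≠ 0, 2a+1 ≠ 0, such that a/2, a+1/2, a+1, a+3/2 and d are not nonpositive integers or zero (so all Pochhammer denominators are nonzero). Then Σ_{k=0}^∞ (a/2)_k ((a+1)/2)_k (d+1)_k x^{2k} / ((1/2)_k (a+1/2)_k (a+1)_k (d)_k k!) = cosh(x) · Σ_{k=0}^∞ (x²/4)^k / ((a+1/2)_k k!) − ((1 − a/d)/(2a+1)) · x·sinh(x) · Σ_{k=0}^∞ (x²/4)^k / ((a+3/2)_k k!). -/

import Mathlib

/-- The Pochhammer symbol `(a)_k = a (a+1) ⋯ (a+k-1)`. -/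
noncomputable def poch (a : ℂ) (k : ℕ) : ℂ := Polynomial.eval a (ascPochhammer ℂ k)

lemma poch_zero (a : ℂ) : poch a 0 = 1 := by simp [poch]

lemma poch_succ (a : ℂ) (k : ℕ) : poch a (k+1) = poch a k * (a + k) := by
  simp [poch, ascPochhammer_succ_eval]

lemma poch_add (a : ℂ) (m n : ℕ) : poch a (m+n) = poch a m * poch (a+m) n := by
  induction n with
  | zero => simp [poch_zero]
  | succ n ih => rw [← add_assoc, poch_succ, ih, poch_succ]; push_cast; ring

lemma poch_succ_left (a : ℂ) (k : ℕ) : poch a (k+1) = a * poch (a+1) k := by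
  rw [add_comm k 1, poch_add, poch_succ, poch_zero]; simp

lemma poch_ne (a : ℂ) (h : ∀ n : ℕ, a ≠ -(n : ℂ)) (k : ℕ) : poch a k ≠ 0 := by
  induction k with
  | zero => simp [poch_zero]
  | succ n ih =>
    rw [poch_succ]
    exact mul_ne_zero ih (fun h' => h n (eq_neg_of_add_eq_zero_left h'))

lemma poch_dup (a : ℂ) (n : ℕ) :
    poch a (2*n) = 4^n * (poch (a/2) n * poch ((a+1)/2) n) := by
  induction n with
  | zero => simp [poch_zero]
  | succ n ih =>
    rw [show 2*(n+1) = 2*n+1+1 by ring, poch_succ, poch_succ, ih, poch_succ, poch_succ]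
    push_cast; ring

lemma fact_even (n : ℕ) : ((2*n).factorial : ℂ) = 4^n * (n.factorial * poch (1/2) n) := by
  induction n with
  | zero => simp [poch_zero]
  | succ n ih =>
    rw [show 2*(n+1) = 2*n+1+1 by ring, Nat.factorial_succ, Nat.factorial_succ, poch_succ,
      Nat.factorial_succ]
    push_cast; rw [ih]; ring

lemma fact_odd (n : ℕ) : ((2*n+1).factorial : ℂ) = 4^n * (n.factorial * poch (3/2) n) := by
  induction n with
  | zero => simp [poch_zero]
  | succ n ih =>
    rw [show 2*(n+1)+1 = 2*n+1+1+1 by ring, Nat.factorial_succ, Nat.factorial_succ, poch_succ,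
      Nat.factorial_succ n]
    push_cast; rw [ih]; ring

lemma vander_aux (r : ℂ) (j : ℕ) :
    (descPochhammer ℤ j).smeval r = poch (r - j + 1) j := by
  rw [Polynomial.descPochhammer_smeval_eq_ascPochhammer, Polynomial.ascPochhammer_smeval_eq_eval, poch]

lemma vander (b c : ℂ) (n : ℕ) :
    ∑ p ∈ Finset.HasAntidiagonal.antidiagonal n, (n.choose p.1 : ℂ) * (poch (b + p.2) p.1 * poch (c + p.1) p.2)
      = poch (b + c + n - 1) n := by
  have h := Ring.descPochhammer_smeval_add n (Commute.all (b + n - 1) (c + n - 1))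
  rw [vander_aux] at h
  rw [show b + c + n - 1 = b + n - 1 + (c + n - 1) - n + 1 by ring, h]
  refine Finset.sum_congr rfl fun p hp => ?_
  rw [vander_aux, vander_aux]
  have : (n:ℂ) = p.1 + p.2 := by
    rw [← Finset.HasAntidiagonal.mem_antidiagonal.mp hp]; push_cast; ring
  rw [this]
  rw [show b + (p.1 + p.2) - 1 - (p.1:ℂ) + 1 = b + p.2 by ring,
    show c + (p.1 + p.2) - 1 - (p.2:ℂ) + 1 = c + p.1 by ring]

lemma conv (b c : ℂ) (hb : ∀ n : ℕ, b ≠ -(n : ℂ)) (hc : ∀ n : ℕ, c ≠ -(n : ℂ)) (n : ℕ) :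
    ∑ p ∈ Finset.HasAntidiagonal.antidiagonal n, 1 / ((p.1.factorial * poch c p.1) * (poch b p.2 * p.2.factorial))
      = poch (b + c + n - 1) n / (n.factorial * poch b n * poch c n) := by
  rw [← vander, Finset.sum_div]
  refine Finset.sum_congr rfl fun p hp => ?_
  obtain ⟨i, j⟩ := p
  have hp := Finset.HasAntidiagonal.mem_antidiagonal.mp hp
  simp only at hp ⊢
  subst hp
  have h1 : poch b (i+j) = poch b j * poch (b+j) i := by rw [add_comm i j, poch_add]
  have h2 := poch_add c i j
  have n1 := poch_ne b hb (i+j)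
  have n2 := poch_ne c hc (i+j)
  have hf : (((i+j).choose i : ℕ):ℂ) * i.factorial * j.factorial = (i+j).factorial := by
    rw [Nat.choose_symm_add]
    exact_mod_cast Nat.add_choose_mul_factorial_mul_factorial i j
  have f1 : ((i.factorial:ℕ):ℂ) ≠ 0 := by exact_mod_cast i.factorial_ne_zero
  have f2 : ((j.factorial:ℕ):ℂ) ≠ 0 := by exact_mod_cast j.factorial_ne_zero
  have f3 : (((i+j).factorial:ℕ):ℂ) ≠ 0 := by exact_mod_cast (i+j).factorial_ne_zero
  rw [h1] at n1; rw [h2] at n2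
  rw [h1, h2]
  have := poch_ne b hb j
  have := poch_ne c hc i
  rw [div_eq_div_iff (by positivity) (by positivity), ← hf]
  ring

lemma half_ne (c : ℝ) (h : 0 < c) : ∀ n : ℕ, (c:ℂ) ≠ -(n : ℂ) := by
  intro n hn
  have : c = -(n:ℝ) := by exact_mod_cast hn
  have : (0:ℝ) ≤ n := n.cast_nonneg
  linarith

lemma summ (b z : ℂ) :
    Summable (fun k : ℕ => z ^ k / (poch b k * (Nat.factorial k : ℂ))) := by
  refine summable_of_ratio_norm_eventually_le (r := 1/2) (by norm_num) ?_
  have h1 : ∀ᶠ k : ℕ in Filter.atTop, ‖b‖ + 1 + 2 * ‖z‖ ≤ (k:ℝ) :=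
    (tendsto_natCast_atTop_atTop (R := ℝ)).eventually_ge_atTop _
  filter_upwards [h1] with k hk
  have e : z ^ (k+1) / (poch b (k+1) * ((k+1).factorial : ℂ)) =
     (z / ((b + k) * (k+1))) * (z ^ k / (poch b k * (Nat.factorial k : ℂ))) := by
    rw [poch_succ, Nat.factorial_succ, pow_succ, div_mul_div_comm]
    push_cast
    congr 1 <;> ring
  rw [e, norm_mul]
  refine mul_le_mul_of_nonneg_right ?_ (norm_nonneg _)
  have hz := norm_nonneg z
  have hb0 := norm_nonneg b
  have n1 : 1 ≤ ‖b + k‖ := by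
    have := norm_sub_norm_le (k:ℂ) (-b)
    rw [norm_neg, Complex.norm_natCast, sub_neg_eq_add, add_comm (k:ℂ)] at this
    linarith
  have n2 : ‖((k:ℂ)+1)‖ = k + 1 := by
    exact_mod_cast Complex.norm_natCast (k+1)
  rw [norm_div, norm_mul, n2, div_le_iff₀ (by positivity)]
  nlinarith

lemma hasSum_of_eq {f g : ℕ → ℂ} {s : ℂ} (h : HasSum g s) (e : ∀ n, f n = g n) : HasSum f s := by
  rw [show f = g from funext e]; exact h

lemma cosh_prod (x b : ℂ) (hb : ∀ n : ℕ, b ≠ -(n : ℂ)) :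
    HasSum (fun n : ℕ => x ^ (2*n) * (poch (b + 1/2 + n - 1) n /
        (4^n * (n.factorial * poch b n * poch (1/2) n))))
      (Complex.cosh x * ∑' k : ℕ, (x ^ 2 / 4) ^ k / (poch b k * (Nat.factorial k : ℂ))) := by
  have h1 := (Complex.hasSum_cosh x).summable.norm
  have h2 := (summ b (x^2/4)).norm
  have h3 := (summable_norm_sum_mul_antidiagonal_of_summable_norm h1 h2).of_norm.hasSum
  rw [← tsum_mul_tsum_eq_tsum_sum_antidiagonal_of_summable_norm h1 h2,
    ← Complex.cosh_eq_tsum] at h3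
  refine hasSum_of_eq h3 fun n => ?_
  have h32 : ∀ n : ℕ, (1/2:ℂ) ≠ -(n : ℂ) := by
    have := half_ne (1/2) (by norm_num)
    push_cast at this; exact this
  have hc := conv b (1/2) hb h32 n
  rw [← div_div _ ((4:ℂ)^n), div_right_comm, ← hc, Finset.sum_div, Finset.mul_sum]
  refine Finset.sum_congr rfl fun p hp => ?_
  obtain ⟨i, j⟩ := p
  have hp := Finset.HasAntidiagonal.mem_antidiagonal.mp hp
  simp only at hp ⊢
  subst hp
  rw [fact_even, div_pow, pow_add 4]
  field_simp
  ring

lemma sinh_prod (x b : ℂ) (hb : ∀ n : ℕ, b ≠ -(n : ℂ)) :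
    HasSum (fun n : ℕ => x ^ (2*n+1) * (poch (b + 3/2 + n - 1) n /
        (4^n * (n.factorial * poch b n * poch (3/2) n))))
      (Complex.sinh x * ∑' k : ℕ, (x ^ 2 / 4) ^ k / (poch b k * (Nat.factorial k : ℂ))) := by
  have h1 := (Complex.hasSum_sinh x).summable.norm
  have h2 := (summ b (x^2/4)).norm
  have h3 := (summable_norm_sum_mul_antidiagonal_of_summable_norm h1 h2).of_norm.hasSum
  rw [← tsum_mul_tsum_eq_tsum_sum_antidiagonal_of_summable_norm h1 h2,
    ← Complex.sinh_eq_tsum] at h3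
  refine hasSum_of_eq h3 fun n => ?_
  have h32 : ∀ n : ℕ, (3/2:ℂ) ≠ -(n : ℂ) := by
    have := half_ne (3/2) (by norm_num)
    push_cast at this; exact this
  have hc := conv b (3/2) hb h32 n
  rw [← div_div _ ((4:ℂ)^n), div_right_comm, ← hc, Finset.sum_div, Finset.mul_sum]
  refine Finset.sum_congr rfl fun p hp => ?_
  obtain ⟨i, j⟩ := p
  have hp := Finset.HasAntidiagonal.mem_antidiagonal.mp hp
  simp only at hp ⊢
  subst hp
  rw [fact_odd, div_pow, pow_add 4]
  field_simp
  ring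

/-- Example (b) of the paper:
`₃F₄(a/2, (a+1)/2, d+1; 1/2, a+1/2, a+1, d; x²)
  = cosh x · ₀F₁(-; a+1/2; x²/4) - ((1-a/d)/(2a+1)) x sinh x · ₀F₁(-; a+3/2; x²/4)`. -/
theorem example_cosh
    (x a d : ℂ)
    (hd0 : d ≠ 0)
    (h2a10 : 2 * a + 1 ≠ 0)
    (ha2 : ∀ n : ℕ, a / 2 ≠ -(n : ℂ))
    (ha1 : ∀ n : ℕ, a + 1 / 2 ≠ -(n : ℂ))
    (hap1 : ∀ n : ℕ, a + 1 ≠ -(n : ℂ))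
    (ha3 : ∀ n : ℕ, a + 3 / 2 ≠ -(n : ℂ))
    (hd : ∀ n : ℕ, d ≠ -(n : ℂ)) :
    ∑' k : ℕ, poch (a / 2) k * poch ((a + 1) / 2) k * poch (d + 1) k * x ^ (2 * k) /
        (poch (1 / 2) k * poch (a + 1 / 2) k * poch (a + 1) k * poch d k *
          (Nat.factorial k : ℂ))
      = Complex.cosh x *
          (∑' k : ℕ, (x ^ 2 / 4) ^ k / (poch (a + 1 / 2) k * (Nat.factorial k : ℂ)))
        - ((1 - a / d) / (2 * a + 1)) * (x * Complex.sinh x) *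
          ∑' k : ℕ, (x ^ 2 / 4) ^ k / (poch (a + 3 / 2) k * (Nat.factorial k : ℂ)) := by
  have ha0 : a ≠ 0 := by
    intro h; apply ha2 0; simp [h]
  have h12 : ∀ n : ℕ, (1/2:ℂ) ≠ -(n : ℂ) := by
    have := half_ne (1/2) (by norm_num)
    push_cast at this; exact this
  have h32 : ∀ n : ℕ, (3/2:ℂ) ≠ -(n : ℂ) := by
    have := half_ne (3/2) (by norm_num)
    push_cast at this; exact this
  have hC := cosh_prod x (a+1/2) ha1
  have hS := (sinh_prod x (a+3/2) ha3).mul_left ((1 - a / d) / (2 * a + 1) * x)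
  let v : ℕ → ℂ := fun n => Nat.casesOn n 0 (fun n => (1 - a / d) / (2 * a + 1) * x *
    (x ^ (2*n+1) * (poch (a+3/2 + 3/2 + n - 1) n /
        (4^n * (n.factorial * poch (a+3/2) n * poch (3/2) n)))))
  have hv : HasSum v ((1 - a / d) / (2 * a + 1) * x * (Complex.sinh x *
      ∑' k : ℕ, (x ^ 2 / 4) ^ k / (poch (a+3/2) k * (Nat.factorial k : ℂ)))) := by
    rw [← hasSum_nat_add_iff' 1]
    simpa [v] using hS
  rw [show ∀ A B C D E : ℂ, A - B * (C * D) * E = A - B * C * (D * E) by intros; ring]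
  refine HasSum.tsum_eq ?_
  refine hasSum_of_eq (hC.sub hv) fun n => ?_
  have hdk : poch (d+1) n / poch d n = (d + n) / d := by
    have := poch_succ_left d n
    rw [poch_succ] at this
    rw [div_eq_div_iff (poch_ne d hd n) hd0]
    linear_combination -this
  have hsplit : poch (a / 2) n * poch ((a + 1) / 2) n * poch (d + 1) n * x ^ (2 * n) /
        (poch (1 / 2) n * poch (a + 1 / 2) n * poch (a + 1) n * poch d n *
          (Nat.factorial n : ℂ)) = x^(2*n) * ((d+n)/d) *
       ((poch (a / 2) n * poch ((a + 1) / 2) n / poch (a+1) n) /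
        (poch (1 / 2) n * poch (a + 1 / 2) n * (Nat.factorial n : ℂ))) := by
    rw [← hdk]
    have := poch_ne d hd n
    have := poch_ne _ hap1 n
    field_simp
  have han : a + n ≠ 0 := by
    rcases n with _ | n
    · simpa using ha0
    · intro h; apply hap1 n; push_cast at h; linear_combination h
  have hT : poch (a / 2) n * poch ((a + 1) / 2) n / poch (a+1) n
      = a / (a+n) * poch (a+n) n / 4^n := by
    have h1 := poch_dup a n
    rw [two_mul, poch_add] at h1
    have h2 := poch_succ_left a n
    rw [poch_succ] at h2
    have := poch_ne _ hap1 n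
    field_simp
    have h3 : a * poch (a+1) n * poch (a+n) n =
      4^n * (poch (a/2) n * poch ((a+1)/2) n) * (a+n) := by
      rw [← h1, ← h2]; ring
    linear_combination -h3
  rw [hsplit, hT]
  rcases n with _ | m
  · simp [v, poch_zero, ha0, hd0]
  · simp only [v]
    push_cast at han ⊢
    rw [show a + 1/2 + 1/2 + ((m:ℂ)+1) - 1 = a + (m+1) by ring,
      show a + 3/2 + 3/2 + (m:ℂ) - 1 = a + (m+1) + 1 by ring,
      poch_succ_left (a+(m+1)), poch_succ_left (1/2), poch_succ_left (a+1/2),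
      show a + 1/2+1 = a+3/2 by ring, show (1/2:ℂ)+1 = 3/2 by norm_num, Nat.factorial_succ]
    have := poch_ne _ h32 m
    have := poch_ne _ ha3 m
    have f1 : ((m.factorial:ℕ):ℂ) ≠ 0 := by exact_mod_cast m.factorial_ne_zero
    have f2 : ((m:ℂ)+1) ≠ 0 := by exact_mod_cast m.succ_ne_zero
    have hh : a + 1/2 = (2*a+1)/2 := by ring
    rw [hh]
    push_cast
    generalize poch (a + (m+1) + 1) m = P
    generalize poch (3/2) m = Q at *
    generalize poch (a+3/2) m = R at *
    field_simp
    ring
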